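/- arXiv:1903.08218 — 4 statements merged into one kernel-verified Lean document; each statement's English description precedes it below -/
import Mathlib

section
/- For every STRIPS planning model M over fluents F and labels A, every P ⊆ F, every state S : Set F and every plan π : List A: if π is executable from S in M, then π is executable from S \ P in the projection f_P(M), and the state trajectory of π from S \ P in f_P(M) equals the pointwise image under the map T ↦ T \ P of the state trajectory of π from S in M. -/
/-- A STRIPS planning model over fluents `F` and action labels `A`. -/
structure Strips (F : Type*) (A : Type*) where
  prec : A → Set F
  add : A → Set F
  del : A → Set F
  I : Set F
  G : Set F

/-- Result of applying action `a` in state `S`. -/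
def Strips.res {F A : Type*} (M : Strips F A) (a : A) (S : Set F) : Set F :=
  (S \ M.del a) ∪ M.add a

/-- The state trajectory `S₀, S₁, …, Sₙ` of a plan from a state. -/
def Strips.traj {F A : Type*} (M : Strips F A) : List A → Set F → List (Set F)
  | [], S => [S]
  | a :: π, S => S :: M.traj π (M.res a S)

/-- A plan is executable from `S` if each action's precondition holds when applied. -/
def Strips.exec {F A : Type*} (M : Strips F A) : List A → Set F → Prop
  | [], _ => True
  | a :: π, S => M.prec a ⊆ S ∧ M.exec π (M.res a S)

/-- The final state `Sₙ` of the trajectory of a plan from a state. -/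
def Strips.finalState {F A : Type*} (M : Strips F A) (π : List A) (S : Set F) : Set F :=
  π.foldl (fun T a => M.res a T) S

/-- The state `S_k` of the trajectory of a plan from a state. -/
def Strips.stateAt {F A : Type*} (M : Strips F A) (π : List A) (S : Set F) (k : ℕ) : Set F :=
  M.finalState (π.take k) S

/-- A plan is valid if it is executable from the initial state and achieves the goal. -/
def Strips.Valid {F A : Type*} (M : Strips F A) (π : List A) : Prop :=
  M.exec π M.I ∧ M.G ⊆ M.finalState π M.I

/-- The set `Π_M` of valid plans of `M`. -/
def Strips.Plans {F A : Type*} (M : Strips F A) : Set (List A) :=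
  {π | M.Valid π}

/-- The projection `f_P(M)` of a model, projecting out the fluents in `P`. -/
def Strips.proj {F A : Type*} (M : Strips F A) (P : Set F) : Strips F A where
  prec a := M.prec a \ P
  add a := M.add a \ P
  del a := M.del a \ P
  I := M.I \ P
  G := M.G \ P

namespace Strips

variable {F A : Type*} (M : Strips F A) (P : Set F)

theorem proj_res_sdiff (a : A) (S : Set F) :
    (M.proj P).res a (S \ P) = M.res a S \ P := by
  have sdiff_sdiff_sdiff_right : (S \ P) \ (M.del a \ P) = (S \ M.del a) \ P := by
    simp only [Set.sdiff_eq_compl_inter (t := P), Set.inter_sdiff_distrib_left]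
  calc (S \ P) \ (M.del a \ P) ∪ M.add a \ P
      = (S \ M.del a) \ P ∪ M.add a \ P := by rw [sdiff_sdiff_sdiff_right]
    _ = (S \ M.del a ∪ M.add a) \ P := Set.union_sdiff_distrib.symm

theorem proj_traj_sdiff (π : List A) (S : Set F) :
    (M.proj P).traj π (S \ P) = (M.traj π S).map (· \ P) := by
  induction π generalizing S with
  | nil => rfl
  | cons a π ih => simp only [traj, List.map_cons, proj_res_sdiff, ih]

variable {M} in
theorem exec.proj_sdiff {π : List A} {S : Set F} (h : M.exec π S) :
    (M.proj P).exec π (S \ P) := by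
  induction π generalizing S with
  | nil => trivial
  | cons a π ih =>
    obtain ⟨prec_subset, exec_tail⟩ := h
    refine ⟨Set.sdiff_subset_sdiff_left prec_subset, ?_⟩
    rw [proj_res_sdiff]
    exact ih exec_tail

end Strips

theorem stmt1 {F A : Type*} (M : Strips F A) (P : Set F) (S : Set F) (π : List A)
    (h : M.exec π S) :
    (M.proj P).exec π (S \ P) ∧
    (M.proj P).traj π (S \ P) = (M.traj π S).map (fun T => T \ P) :=
  ⟨h.proj_sdiff P, M.proj_traj_sdiff P π S⟩
end

section
/- (Preservation of natural landmark orderings under concretization.) Let M be a STRIPS planning model over fluents F, P ⊆ F, and φ, φ' : Set F → Prop. Say φ ≺_nat φ' holds in a model N if for every valid plan π ∈ Π_N with state trajectory S₀, …, Sₙ from the initial state and every index j ≤ n such that φ' holds at S_j and φ' holds at no S_k with k < j (φ' is made true for the first time at step j), there exists i < j with φ(S_i). If φ ≺_nat φ' holds in the projection f_P(M), then the lifted predicates S ↦ φ(S \ P) and S ↦ φ'(S \ P) satisfy the natural ordering in M. -/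
/-- Natural landmark ordering `φ ≺_nat φ'` in model `N`. -/
def NatOrd {F A : Type*} (N : Strips F A) (φ φ' : Set F → Prop) : Prop :=
  ∀ π ∈ N.Plans, ∀ j ≤ π.length,
    φ' (N.stateAt π N.I j) → (∀ k < j, ¬ φ' (N.stateAt π N.I k)) →
      ∃ i < j, φ (N.stateAt π N.I i)

/-! Deleting the fluents of `P` commutes with applying actions, since
`((S \ D) ∪ B) \ P = ((S \ P) \ (D \ P)) ∪ (B \ P)`, and preserves satisfaction of preconditions
and goals. So every valid plan of `M` is valid for `f_P(M)`, and its trajectory there is the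
pointwise image of its trajectory in `M`. The natural ordering only speaks about valid plans and the
states they visit, hence it pulls back along any such homomorphic map of states. -/

namespace Strips

variable {F F' A : Type*}

/-- A map of states exhibiting `N` as an abstraction of `M` over the same action labels: it commutes
with applying actions and preserves the initial state. Preconditions and goals are only required to
stay satisfied, so `N` may admit more plans than `M`. -/
structure IsAbstraction (M : Strips F A) (N : Strips F' A) (f : Set F → Set F') : Prop where
  map_init : f M.I = N.I
  map_res (a : A) (S : Set F) : f (M.res a S) = N.res a (f S)
  prec_subset {a : A} {S : Set F} : M.prec a ⊆ S → N.prec a ⊆ f S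
  goal_subset {S : Set F} : M.G ⊆ S → N.G ⊆ f S

namespace IsAbstraction

variable {M : Strips F A} {N : Strips F' A} {f : Set F → Set F'}

theorem map_finalState (hf : M.IsAbstraction N f) (π : List A) (S : Set F) :
    f (M.finalState π S) = N.finalState π (f S) :=
  (List.foldl_hom f fun T a => (hf.map_res a T).symm).symm

theorem map_stateAt_init (hf : M.IsAbstraction N f) (π : List A) (k : ℕ) :
    f (M.stateAt π M.I k) = N.stateAt π N.I k := by
  rw [← hf.map_init]
  exact hf.map_finalState (π.take k) M.I

theorem exec_map (hf : M.IsAbstraction N f) {π : List A} {S : Set F} (h : M.exec π S) :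
    N.exec π (f S) := by
  induction π generalizing S with
  | nil => trivial
  | cons a π ih => exact ⟨hf.prec_subset h.1, hf.map_res a S ▸ ih h.2⟩

theorem plans_subset (hf : M.IsAbstraction N f) : M.Plans ⊆ N.Plans := by
  rintro π ⟨hexec, hgoal⟩
  constructor
  · exact hf.map_init ▸ hf.exec_map hexec
  · rw [← hf.map_init, ← hf.map_finalState]
    exact hf.goal_subset hgoal

end IsAbstraction

theorem res_sdiff (M : Strips F A) (P : Set F) (a : A) (S : Set F) :
    M.res a S \ P = (M.proj P).res a (S \ P) := by
  have sdiff_sdiff_distrib_right : (S \ M.del a) \ P = (S \ P) \ (M.del a \ P) := by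
    rw [Set.sdiff_sdiff, Set.sdiff_sdiff, Set.union_sdiff_self, Set.union_comm]
  simp only [res, proj, Set.union_sdiff_distrib, sdiff_sdiff_distrib_right]

theorem isAbstraction_proj (M : Strips F A) (P : Set F) :
    M.IsAbstraction (M.proj P) (· \ P) where
  map_init := rfl
  map_res := M.res_sdiff P
  prec_subset := Set.sdiff_subset_sdiff_left
  goal_subset := Set.sdiff_subset_sdiff_left

end Strips

theorem stmt8_general {F F' A : Type*} {M : Strips F A} {N : Strips F' A} {f : Set F → Set F'}
    (hf : M.IsAbstraction N f) {φ φ' : Set F' → Prop} (h : NatOrd N φ φ') :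
    NatOrd M (fun S => φ (f S)) (fun S => φ' (f S)) := by
  intro π hπ j hj hφ' hfirst
  simp only [hf.map_stateAt_init] at hφ' hfirst ⊢
  exact h π (hf.plans_subset hπ) j hj hφ' hfirst

theorem stmt8 {F A : Type*} (M : Strips F A) (P : Set F) (φ φ' : Set F → Prop)
    (h : NatOrd (M.proj P) φ φ') :
    NatOrd M (fun S => φ (S \ P)) (fun S => φ' (S \ P)) :=
  stmt8_general (M.isAbstraction_proj P) h
end

section
/- (Preservation of greedy necessary landmark orderings under concretization.) Let M be a STRIPS planning model over fluents F, P ⊆ F, and φ, φ' : Set F → Prop. Say φ ≺_gnec φ' holds in a model N if for every valid plan π ∈ Π_N with state trajectory S₀, …, Sₙ from the initial state, whenever j is the least index with φ'(S_j) and j > 0, then φ holds at S_{j-1}. If φ ≺_gnec φ' holds in the projection f_P(M), then the lifted predicates S ↦ φ(S \ P) and S ↦ φ'(S \ P) satisfy the greedy necessary ordering in M. -/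
/-- Greedy necessary landmark ordering `φ ≺_gnec φ'` in model `N`. -/
def GnecOrd {F A : Type*} (N : Strips F A) (φ φ' : Set F → Prop) : Prop :=
  ∀ π ∈ N.Plans, ∀ j, 0 < j → j ≤ π.length →
    φ' (N.stateAt π N.I j) → (∀ k < j, ¬ φ' (N.stateAt π N.I k)) →
      φ (N.stateAt π N.I (j - 1))

/-!
Deleting fluents commutes with applying actions and only weakens preconditions and goals. A plan
of `M` is therefore a plan of `f_P(M)`, and its trajectory there is the projected trajectory, so
the lifted `φ'` first holds in `M` at the very index where `φ'` first holds in `f_P(M)`.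
-/

namespace Strips

variable {F A : Type*} {M : Strips F A} {π : List A} {S : Set F}

theorem res_proj (M : Strips F A) (P : Set F) (a : A) (S : Set F) :
    (M.proj P).res a (S \ P) = M.res a S \ P :=
  calc (S \ P) \ (M.del a \ P) ∪ M.add a \ P
      = (S \ M.del a) \ P ∪ M.add a \ P := by
        rw [Set.sdiff_sdiff, Set.union_sdiff_self, Set.union_comm P, ← Set.sdiff_sdiff]
    _ = (S \ M.del a ∪ M.add a) \ P := Set.union_sdiff_distrib.symm

theorem finalState_proj (M : Strips F A) (P : Set F) (π : List A) (S : Set F) :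
    (M.proj P).finalState π (S \ P) = M.finalState π S \ P :=
  List.foldl_hom (· \ P) fun T a => M.res_proj P a T

theorem stateAt_proj (M : Strips F A) (P : Set F) (π : List A) (S : Set F) (k : ℕ) :
    (M.proj P).stateAt π (S \ P) k = M.stateAt π S k \ P :=
  M.finalState_proj P (π.take k) S

theorem exec.proj (h : M.exec π S) (P : Set F) : (M.proj P).exec π (S \ P) := by
  induction π generalizing S with
  | nil => trivial
  | cons a π ih =>
    obtain ⟨hprec, hexec⟩ := h
    refine ⟨Set.sdiff_subset_sdiff_left hprec, ?_⟩
    rw [res_proj]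
    exact ih hexec

theorem Valid.proj (h : M.Valid π) (P : Set F) : (M.proj P).Valid π := by
  obtain ⟨hexec, hgoal⟩ := h
  refine ⟨hexec.proj P, ?_⟩
  calc M.G \ P ⊆ M.finalState π M.I \ P := Set.sdiff_subset_sdiff_left hgoal
    _ = (M.proj P).finalState π (M.I \ P) := (M.finalState_proj P π M.I).symm

theorem plans_subset_plans_proj (M : Strips F A) (P : Set F) : M.Plans ⊆ (M.proj P).Plans :=
  fun _ hπ => Valid.proj hπ P

end Strips

theorem GnecOrd.comap {F F' A : Type*} {M : Strips F A} {N : Strips F' A}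
    {φ φ' : Set F' → Prop} (h : GnecOrd N φ φ') (f : Set F → Set F')
    (hplans : M.Plans ⊆ N.Plans)
    (hstate : ∀ π ∈ M.Plans, ∀ k, N.stateAt π N.I k = f (M.stateAt π M.I k)) :
    GnecOrd M (fun S => φ (f S)) (fun S => φ' (f S)) := by
  intro π hπ
  simpa only [hstate π hπ] using h π (hplans hπ)

theorem stmt10 {F A : Type*} (M : Strips F A) (P : Set F) (φ φ' : Set F → Prop)
    (h : GnecOrd (M.proj P) φ φ') :
    GnecOrd M (fun S => φ (S \ P)) (fun S => φ' (S \ P)) :=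
  h.comap (· \ P) (M.plans_subset_plans_proj P) fun π _ k => M.stateAt_proj P π M.I k
end

section
/- (Correctness of the constrained-model compilation σ(M).) Let M be a STRIPS planning model over fluents F and labels A, and let d be a deterministic finite automaton over alphabet A with finite state type Q, accepting the language L(d). Then there exist a type F', a type A', a STRIPS planning model M' over fluents F' and labels A', and a map h : A' → Option A such that the image of the valid plans of M' under the map π ↦ π.filterMap h is exactly Π_M ∩ L(d); that is, a word over A is a valid plan of M satisfying the constraint given by d if and only if it arises from some valid plan of M' by erasing the auxiliary labels via h. -/
/-!
Run the automaton alongside the model, recording its current state in additional fluents. The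
label of each action names the automaton state in which it is taken, so a single action can both
check and update that state. An executable plan from a given automaton state is then determined by
the word it spells. A STRIPS goal is conjunctive and cannot express that one of several accepting
states holds, which is why a separate fluent records acceptance.
-/

namespace Strips

universe u v w

variable {F : Type u} {A : Type v} {Q : Type w} (M : Strips F A) (d : DFA A Q)

/-- The joint state of a planning state `S` and an automaton state `q`. The fluent `inr (some q)`
says that the automaton is in state `q`, and `inr none` that its current state is accepting. -/
def productState (S : Set F) (q : Q) : Set (F ⊕ Option Q) :=
  Sum.inl '' S ∪ Sum.inr '' {o | o = some q ∨ o = none ∧ q ∈ d.accept}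

/-- The synchronous product of a planning model and a DFA, whose valid plans spell the valid plans
of `M` that `d` accepts. The label `(a, q)` stands for taking action `a` while the automaton is in
state `q`. -/
def product : Strips (F ⊕ Option Q) (A × Q) where
  prec x := Sum.inl '' M.prec x.1 ∪ {Sum.inr (some x.2)}
  add x := productState d (M.add x.1) (d.step x.2 x.1)
  del x := Sum.inl '' M.del x.1 ∪ Set.range Sum.inr
  I := productState d M.I d.start
  G := Sum.inl '' M.G ∪ {Sum.inr none}

/-- The word `w` with every letter paired with the automaton state in which it is read, starting
from `q`: the plan of the product model that spells `w`. -/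
def annotate : Q → List A → List (A × Q)
  | _, [] => []
  | q, a :: w => (a, q) :: annotate (d.step q a) w

theorem map_fst_annotate (q : Q) (w : List A) :
    (annotate d q w).map Prod.fst = w := by
  induction w generalizing q with
  | nil => rfl
  | cons a w ih => exact congrArg (a :: ·) (ih (d.step q a))

theorem product_prec_subset_productState (a : A) (p q : Q) (S : Set F) :
    (M.product d).prec (a, p) ⊆ productState d S q ↔ M.prec a ⊆ S ∧ p = q := by
  simp [product, productState, Set.subset_def, and_comm, eq_comm]

theorem product_G_subset_productState (S : Set F) (q : Q) :
    (M.product d).G ⊆ productState d S q ↔ M.G ⊆ S ∧ q ∈ d.accept := by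
  simp [product, productState, Set.subset_def, and_comm]

theorem product_res_productState (a : A) (p q : Q) (S : Set F) :
    (M.product d).res (a, p) (productState d S q) =
      productState d (M.res a S) (d.step p a) := by
  ext (x | o) <;> simp [res, product, productState]

theorem product_exec_iff (π : List (A × Q)) (S : Set F) (q : Q) :
    (M.product d).exec π (productState d S q) ↔
      M.exec (π.map Prod.fst) S ∧ annotate d q (π.map Prod.fst) = π := by
  induction π generalizing S q with
  | nil => simp [exec, annotate]
  | cons x π ih =>
    obtain ⟨a, p⟩ := x
    simp only [exec, product_prec_subset_productState, product_res_productState, ih,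
      List.map_cons, annotate, List.cons.injEq, Prod.mk.injEq, true_and]
    grind

theorem product_finalState_annotate (w : List A) (S : Set F) (q : Q) :
    (M.product d).finalState (annotate d q w) (productState d S q) =
      productState d (M.finalState w S) (d.evalFrom q w) := by
  induction w generalizing S q with
  | nil => rfl
  | cons a w ih =>
    calc
      _ = (M.product d).finalState (annotate d (d.step q a) w)
            ((M.product d).res (a, q) (productState d S q)) := rfl
      _ = _ := by rw [product_res_productState, ih]; rfl

theorem mem_product_plans_iff (π : List (A × Q)) :
    π ∈ (M.product d).Plans ↔
      π.map Prod.fst ∈ M.Plans ∩ (d.accepts : Set (List A)) ∧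
        annotate d d.start (π.map Prod.fst) = π := by
  change (M.product d).exec π (productState d M.I d.start) ∧
    (M.product d).G ⊆ (M.product d).finalState π (productState d M.I d.start) ↔ _
  have goal_iff (h : annotate d d.start (π.map Prod.fst) = π) :
      (M.product d).G ⊆ (M.product d).finalState π (productState d M.I d.start) ↔
        M.G ⊆ M.finalState (π.map Prod.fst) M.I ∧ d.eval (π.map Prod.fst) ∈ d.accept := by
    conv_lhs => rw [← h, product_finalState_annotate, product_G_subset_productState]
    rfl
  have mem_iff : π.map Prod.fst ∈ M.Plans ∩ (d.accepts : Set (List A)) ↔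
      (M.exec (π.map Prod.fst) M.I ∧ M.G ⊆ M.finalState (π.map Prod.fst) M.I) ∧
        d.eval (π.map Prod.fst) ∈ d.accept := Iff.rfl
  rw [product_exec_iff, mem_iff]
  tauto

theorem bijOn_map_fst_product_plans :
    Set.BijOn (List.map Prod.fst) (M.product d).Plans
      (M.Plans ∩ (d.accepts : Set (List A))) := by
  have left_inv : Set.LeftInvOn (annotate d d.start) (List.map Prod.fst) (M.product d).Plans :=
    fun π hπ => ((mem_product_plans_iff M d π).1 hπ).2
  have right_inv : Set.RightInvOn (annotate d d.start) (List.map Prod.fst)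
      (M.Plans ∩ (d.accepts : Set (List A))) :=
    fun w _ => map_fst_annotate d d.start w
  refine Set.InvOn.bijOn ⟨left_inv, right_inv⟩
    (fun π hπ => ((mem_product_plans_iff M d π).1 hπ).1) fun w hw => ?_
  rw [mem_product_plans_iff, map_fst_annotate]
  exact ⟨hw, rfl⟩

end Strips

theorem stmt15_general.{u, v, w} {F : Type u} {A : Type v} (M : Strips F A) {Q : Type w}
    (d : DFA A Q) :
    ∃ (F' : Type (max u w)) (A' : Type (max v w)) (M' : Strips F' A') (h : A' → A),
      Set.BijOn (List.map h) M'.Plans (M.Plans ∩ (d.accepts : Set (List A))) :=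
  ⟨F ⊕ Option Q, A × Q, M.product d, Prod.fst, M.bijOn_map_fst_product_plans d⟩

theorem stmt15 {F A : Type} (M : Strips F A) {Q : Type} [Fintype Q] (d : DFA A Q) :
    ∃ (F' A' : Type) (M' : Strips F' A') (h : A' → Option A),
      (fun π => π.filterMap h) '' M'.Plans = M.Plans ∩ (d.accepts : Set (List A)) := by
  obtain ⟨F', A', M', h, bij⟩ := stmt15_general M d
  exact ⟨F', A', M', some ∘ h, by simpa only [List.filterMap_eq_map] using bij.image_eq⟩
end
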